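/- Assume b̃ > 0 and fix μ > 0, ξ > 0, σ > 0. Define v(t,r,x) = x·M(T−t,r) + μ(T−t)·M(T−t,r) + ξ·γ(t,r) on [0,T) × ℝ × ℝ. Then v solves the Hamilton–Jacobi–Bellman equation: for every (t,r,x) ∈ (0,T) × ℝ × ℝ, ∂_t v + μ·∂_x v + (σ²/2)·∂_{xx} v + a(b−r)·∂_r v + (δ²/2)·∂_{rr} v − r·v + ξ·max(1 − ∂_x v, 0) = 0, where ξ·max(1 − ∂_x v, 0) = sup_{0 ≤ c ≤ ξ} c·(1 − ∂_x v). -/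

import Mathlib

open Real Filter MeasureTheory intervalIntegral

noncomputable def M (a δ b u r : ℝ) : ℝ :=
  Real.exp (-(b - δ^2/(2*a^2))*u + ((b - δ^2/(2*a^2)) - r)/a * (1 - Real.exp (-(a*u)))
    - δ^2/(4*a^3) * (1 - Real.exp (-(a*u)))^2)

/-- The separating curve `α(t)`. -/
noncomputable def alphaCurve (a δ b T t : ℝ) : ℝ :=
  (b - δ^2/(2*a^2)) * (1 - a*(T - t)/(1 - Real.exp (-(a*(T - t)))))
    - δ^2/(4*a^2) * (1 - Real.exp (-(a*(T - t))))

/-- The Gaussian kernel `φ(z,u,r)`. -/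
noncomputable def phiKer (a δ b z u r : ℝ) : ℝ :=
  (Real.sqrt (2*Real.pi*(δ^2/(2*a))*(1 - Real.exp (-(2*a*u)))))⁻¹ *
    Real.exp (-(z - r*Real.exp (-(a*u)) - b*(1 - Real.exp (-(a*u)))
      + δ^2/(2*a^2)*(1 - Real.exp (-(a*u)))^2)^2
      / (2*(δ^2/(2*a))*(1 - Real.exp (-(2*a*u)))))

/-- The function `γ(t,r) = ∫_0^{T−t} ∫_{α(u+t)}^∞ M(u,r)(1−M(T−u−t,z))φ(z,u,r) dz du`. -/
noncomputable def gammaFun (a δ b T t r : ℝ) : ℝ :=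
  ∫ u in (0:ℝ)..(T - t), ∫ z in Set.Ioi (alphaCurve a δ b T (u + t)),
    M a δ b u r * (1 - M a δ b (T - u - t) z) * phiKer a δ b z u r

/-- The candidate value function
`v(t,r,x) = x·M(T−t,r) + μ(T−t)·M(T−t,r) + ξ·γ(t,r)`. -/
noncomputable def vFun (a δ b T μ ξ t r x : ℝ) : ℝ :=
  x * M a δ b (T - t) r + μ*(T - t)*M a δ b (T - t) r + ξ * gammaFun a δ b T t r


open Set Topology ProbabilityTheory

/-- The density of the standard normal law. -/
noncomputable def normalDensity (x : ℝ) : ℝ := (√(2 * π))⁻¹ * exp (-x ^ 2 / 2)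

/-- The distribution function of the standard normal law. -/
noncomputable def normalCdf (x : ℝ) : ℝ := ∫ y in Iic x, normalDensity y

lemma normalDensity_eq : normalDensity = gaussianPDFReal 0 1 := by
  ext x
  simp [normalDensity, gaussianPDFReal]

lemma normalDensity_nonneg (x : ℝ) : 0 ≤ normalDensity x := by
  unfold normalDensity; positivity

lemma normalDensity_le_one (x : ℝ) : normalDensity x ≤ 1 := by
  have h1 : exp (-x ^ 2 / 2) ≤ 1 := exp_le_one_iff.2 (by nlinarith [sq_nonneg x])
  have h2 : (√(2 * π))⁻¹ ≤ 1 := by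
    refine inv_le_one_of_one_le₀ (one_le_sqrt.2 ?_)
    linarith [pi_gt_three]
  exact mul_le_one₀ h2 (exp_pos _).le h1

lemma continuous_normalDensity : Continuous normalDensity := by
  unfold normalDensity; fun_prop

lemma integrable_normalDensity : Integrable normalDensity := by
  rw [normalDensity_eq]; exact integrable_gaussianPDFReal 0 1

lemma integral_normalDensity : ∫ x, normalDensity x = 1 := by
  rw [normalDensity_eq]; exact integral_gaussianPDFReal_eq_one 0 one_ne_zero

lemma normalCdf_nonneg (x : ℝ) : 0 ≤ normalCdf x :=
  setIntegral_nonneg measurableSet_Iic fun y _ => normalDensity_nonneg y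

lemma normalCdf_le_one (x : ℝ) : normalCdf x ≤ 1 := by
  rw [← integral_normalDensity]
  exact setIntegral_le_integral integrable_normalDensity
    (ae_of_all _ normalDensity_nonneg)

lemma hasDerivAt_normalCdf (x : ℝ) : HasDerivAt normalCdf (normalDensity x) x := by
  have h : normalCdf = fun x => normalCdf 0 + ∫ y in (0:ℝ)..x, normalDensity y := by
    ext x
    rw [← integral_Iic_sub_Iic integrable_normalDensity.integrableOn
      integrable_normalDensity.integrableOn]
    simp [normalCdf]
  rw [h]
  exact (continuous_normalDensity.integral_hasStrictDerivAt 0 x).hasDerivAt.const_add _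

lemma continuous_normalCdf : Continuous normalCdf :=
  continuous_iff_continuousAt.2 fun x => (hasDerivAt_normalCdf x).continuousAt

lemma abs_normalCdf_sub_le (x y : ℝ) : |normalCdf x - normalCdf y| ≤ |x - y| := by
  have := Convex.norm_image_sub_le_of_norm_hasDerivWithin_le (s := univ) (C := 1)
    (fun z _ => (hasDerivAt_normalCdf z).hasDerivWithinAt)
    (fun z _ => by
      rw [norm_of_nonneg (normalDensity_nonneg z)]; exact normalDensity_le_one z)
    convex_univ (mem_univ y) (mem_univ x)
  simpa using this

lemma tendsto_normalCdf_atTop : Tendsto normalCdf atTop (𝓝 1) := by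
  have h := tendsto_setIntegral_of_monotone (μ := volume) (f := normalDensity)
    (s := fun x : ℝ => Iic x) (fun x => measurableSet_Iic) (fun x y h => Iic_subset_Iic.2 h)
    integrable_normalDensity.integrableOn
  have hu : ⋃ x : ℝ, Iic x = univ := iUnion_Iic
  rwa [hu, setIntegral_univ, integral_normalDensity] at h

lemma tendsto_normalCdf_atBot : Tendsto normalCdf atBot (𝓝 0) := by
  have h := intervalIntegral_tendsto_integral_Iic (0 : ℝ)
    integrable_normalDensity.integrableOn tendsto_id
  have h2 : Tendsto (fun x => normalCdf 0 - ∫ y in x..(0:ℝ), normalDensity y) atBot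
      (𝓝 (normalCdf 0 - normalCdf 0)) := tendsto_const_nhds.sub h
  rw [sub_self] at h2
  refine h2.congr fun x => ?_
  rw [← integral_Iic_sub_Iic integrable_normalDensity.integrableOn
      integrable_normalDensity.integrableOn]
  simp [normalCdf]

lemma integrable_gaussian_kernel {s : ℝ} (hs : 0 < s) (m : ℝ) :
    Integrable fun z => (√(2 * π) * s)⁻¹ * exp (-(z - m) ^ 2 / (2 * s ^ 2)) := by
  have h := (integrable_normalDensity.comp_div hs.ne').comp_sub_right m
  refine (h.const_mul s⁻¹).congr (ae_of_all _ fun z => ?_)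
  simp only [normalDensity]
  rw [mul_inv, div_pow, ← mul_assoc, mul_comm s⁻¹]
  congr 2
  field_simp

/-- The upper tail of a normal density of mean `m` and standard deviation `s`. -/
lemma integral_Ioi_gaussian_kernel {s : ℝ} (hs : 0 < s) (m c : ℝ) :
    ∫ z in Ioi c, (√(2 * π) * s)⁻¹ * exp (-(z - m) ^ 2 / (2 * s ^ 2))
      = normalCdf ((m - c) / s) := by
  have himg : image (fun z => (m - z) / s) (Ioi c) = Iio ((m - c) / s) := by
    ext y
    simp only [mem_image, mem_Ioi, mem_Iio]
    constructor
    · rintro ⟨z, hz, rfl⟩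
      gcongr
    · intro hy
      refine ⟨m - s * y, ?_, by field_simp; ring⟩
      rw [lt_div_iff₀ hs] at hy
      linarith
  have hd : ∀ z ∈ Ioi c, HasDerivWithinAt (fun z => (m - z) / s) (-1 / s) (Ioi c) z :=
    fun z _ => (((hasDerivAt_id z).const_sub m).div_const s).hasDerivWithinAt
  have hinj : InjOn (fun z => (m - z) / s) (Ioi c) := by
    intro z _ w _ h
    simp only at h
    field_simp at h
    linarith
  rw [normalCdf, integral_Iic_eq_integral_Iio, ← himg,
    integral_image_eq_integral_abs_deriv_smul measurableSet_Ioi hd hinj]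
  refine setIntegral_congr_fun measurableSet_Ioi fun z _ => ?_
  simp only [normalDensity, smul_eq_mul]
  rw [abs_div, abs_neg, abs_one, abs_of_pos hs, mul_inv, mul_comm (√(2 * π))⁻¹, one_div, mul_assoc]
  congr 3
  field_simp
  ring

/-- The loading `(1 - e^{-au}) / a` of the short rate in the Vasicek bond price. -/
noncomputable def bondLoading (a u : ℝ) : ℝ := (1 - exp (-(a * u))) / a

/-- The mean of `φ(·,u,r)`. -/
noncomputable def kernelMean (a δ b u r : ℝ) : ℝ :=
  r * exp (-(a * u)) + b * (1 - exp (-(a * u))) - δ ^ 2 / (2 * a ^ 2) * (1 - exp (-(a * u))) ^ 2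

/-- The standard deviation of `φ(·,u,r)`. -/
noncomputable def kernelStd (a δ u : ℝ) : ℝ := √(δ ^ 2 / (2 * a) * (1 - exp (-(2 * a * u))))

/-- The separating curve as a function of the time to maturity. -/
noncomputable def barrier (a δ b w : ℝ) : ℝ := alphaCurve a δ b w 0

/-- The normalised distance of the mean of the kernel from the barrier. -/
noncomputable def barrierDist (a δ b τ r u : ℝ) : ℝ :=
  (kernelMean a δ b u r - barrier a δ b (τ - u)) / kernelStd a δ u

/-- The inner integral of `γ` in closed form, as a function of the time to maturity `τ`. -/
noncomputable def innerVal (a δ b τ r u : ℝ) : ℝ :=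
  M a δ b u r * normalCdf (barrierDist a δ b τ r u)
    - M a δ b τ r * normalCdf
        (barrierDist a δ b τ r u - bondLoading a (τ - u) * kernelStd a δ u)

section

variable {a δ b τ r u w : ℝ}

lemma alphaCurve_eq_barrier (T t : ℝ) : alphaCurve a δ b T t = barrier a δ b (T - t) := by
  simp [barrier, alphaCurve]

lemma M_pos : 0 < M a δ b u r := exp_pos _

lemma M_zero : M a δ b 0 r = 1 := by simp [M]

lemma M_eq_mul_exp (ha : a ≠ 0) (x : ℝ) :
    M a δ b w r = M a δ b w x * exp (bondLoading a w * (x - r)) := by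
  rw [M, M, ← exp_add, bondLoading]
  congr 1
  field_simp
  ring

lemma hasDerivAt_exp_neg_mul (a u : ℝ) :
    HasDerivAt (fun u => exp (-(a * u))) (-a * exp (-(a * u))) u := by
  have h : HasDerivAt (fun u => -(a * u)) (-(a * 1)) u := ((hasDerivAt_id u).const_mul a).neg
  exact h.exp.congr_deriv (by ring)

lemma hasDerivAt_bondLoading (ha : a ≠ 0) (u : ℝ) :
    HasDerivAt (bondLoading a) (exp (-(a * u))) u := by
  exact (((hasDerivAt_exp_neg_mul a u).const_sub 1).div_const a).congr_deriv (by field_simp)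

lemma bondLoading_nonneg (ha : 0 < a) (hu : 0 ≤ u) : 0 ≤ bondLoading a u := by
  have : exp (-(a * u)) ≤ 1 := exp_le_one_iff.2 (by nlinarith)
  exact div_nonneg (by linarith) ha.le

lemma bondLoading_le (ha : 0 < a) (u : ℝ) : bondLoading a u ≤ u := by
  rw [bondLoading, div_le_iff₀ ha]
  linarith [add_one_le_exp (-(a * u))]

lemma bondLoading_sub (ha : a ≠ 0) (τ u : ℝ) :
    bondLoading a τ - bondLoading a u = exp (-(a * u)) * bondLoading a (τ - u) := by
  have : exp (-(a * τ)) = exp (-(a * u)) * exp (-(a * (τ - u))) := by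
    rw [← exp_add]; ring_nf
  rw [bondLoading, bondLoading, bondLoading, this]
  field_simp
  ring

lemma one_sub_exp_pos (ha : 0 < a) (hu : 0 < u) : 0 < 1 - exp (-(a * u)) := by
  have : exp (-(a * u)) < 1 := exp_lt_one_iff.2 (by nlinarith)
  linarith

lemma kernelVar_pos (ha : 0 < a) (hδ : 0 < δ) (hu : 0 < u) :
    0 < δ ^ 2 / (2 * a) * (1 - exp (-(2 * a * u))) := by
  have := one_sub_exp_pos (a := 2 * a) (by positivity) hu
  positivity

lemma kernelStd_pos (ha : 0 < a) (hδ : 0 < δ) (hu : 0 < u) : 0 < kernelStd a δ u :=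
  sqrt_pos.2 (kernelVar_pos ha hδ hu)

lemma exp_two_mul_eq : exp (-(2 * a * u)) = exp (-(a * u)) ^ 2 := by
  rw [← exp_nat_mul]; push_cast; ring_nf

lemma kernelStd_sq (ha : 0 < a) (hδ : 0 < δ) (hu : 0 < u) :
    kernelStd a δ u ^ 2 = δ ^ 2 / (2 * a) * (1 - exp (-(a * u)) ^ 2) := by
  rw [kernelStd, sq_sqrt (kernelVar_pos ha hδ hu).le, exp_two_mul_eq]

lemma hasDerivAt_kernelStd (ha : 0 < a) (hδ : 0 < δ) (hu : 0 < u) :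
    HasDerivAt (kernelStd a δ) (δ ^ 2 * exp (-(a * u)) ^ 2 / (2 * kernelStd a δ u)) u := by
  have h := (((hasDerivAt_exp_neg_mul (2 * a) u).const_sub 1).const_mul
    (δ ^ 2 / (2 * a))).sqrt (kernelVar_pos ha hδ hu).ne'
  refine h.congr_deriv ?_
  rw [kernelStd, exp_two_mul_eq]
  congr 1
  field_simp

lemma continuous_kernelStd : Continuous (kernelStd a δ) := by
  unfold kernelStd; fun_prop

lemma hasDerivAt_M_rate : HasDerivAt (fun r => M a δ b u r) (-bondLoading a u * M a δ b u r) r := by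
  have h := (((((hasDerivAt_id r).const_sub (b - δ ^ 2 / (2 * a ^ 2))).div_const a).mul_const
    (1 - exp (-(a * u)))).const_add (-(b - δ ^ 2 / (2 * a ^ 2)) * u)).sub_const
    (δ ^ 2 / (4 * a ^ 3) * (1 - exp (-(a * u))) ^ 2)
  refine h.exp.congr_deriv ?_
  simp only [M, bondLoading, id]
  ring

/-- The coefficient `∂_u log M(u,r)`. -/
noncomputable def bondRate (a δ b u r : ℝ) : ℝ :=
  -(a * (b - r)) * bondLoading a u + δ ^ 2 / 2 * bondLoading a u ^ 2 - r

lemma hasDerivAt_M_time (ha : a ≠ 0) :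
    HasDerivAt (fun u => M a δ b u r) (bondRate a δ b u r * M a δ b u r) u := by
  have he := (hasDerivAt_exp_neg_mul a u).const_sub 1
  have h := ((((hasDerivAt_id u).const_mul (-(b - δ ^ 2 / (2 * a ^ 2)))).add
    (he.const_mul ((b - δ ^ 2 / (2 * a ^ 2) - r) / a))).sub
    ((he.pow 2).const_mul (δ ^ 2 / (4 * a ^ 3))))
  refine h.exp.congr_deriv ?_
  simp only [id, Pi.add_apply, Pi.sub_apply, Pi.pow_apply, bondRate, M, bondLoading]
  rw [mul_comm]
  congr 1
  field_simp
  ring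

/-- The tower property of discounted bond prices. -/
lemma M_mul_M_kernelMean (ha : 0 < a) (hδ : 0 < δ) (hu : 0 < u) :
    M a δ b u r * (M a δ b w (kernelMean a δ b u r)
      * exp (bondLoading a w ^ 2 * kernelStd a δ u ^ 2 / 2)) = M a δ b (u + w) r := by
  have : exp (-(a * (u + w))) = exp (-(a * u)) * exp (-(a * w)) := by
    rw [← exp_add]; ring_nf
  rw [kernelStd_sq ha hδ hu, M, M, M, ← exp_add, ← exp_add, bondLoading, kernelMean, this]
  congr 1
  field_simp
  ring

lemma M_barrier (ha : 0 < a) (hw : 0 < w) : M a δ b w (barrier a δ b w) = 1 := by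
  have := one_sub_exp_pos ha hw
  rw [M, exp_eq_one_iff, barrier, alphaCurve, sub_zero]
  field_simp
  ring

lemma differentiableAt_barrier (ha : 0 < a) (hw : 0 < w) :
    DifferentiableAt ℝ (barrier a δ b) w := by
  have h : 1 - exp (-(a * (w - 0))) ≠ 0 := by
    rw [sub_zero]; exact (one_sub_exp_pos ha hw).ne'
  unfold barrier alphaCurve
  fun_prop (disch := assumption)

lemma phiKer_eq (z : ℝ) (ha : 0 < a) (hδ : 0 < δ) (hu : 0 < u) :
    phiKer a δ b z u r = (√(2 * π) * kernelStd a δ u)⁻¹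
      * exp (-(z - kernelMean a δ b u r) ^ 2 / (2 * kernelStd a δ u ^ 2)) := by
  rw [phiKer, kernelStd, ← sqrt_mul (by positivity), sq_sqrt (kernelVar_pos ha hδ hu).le,
    kernelMean]
  congr 2
  · ring_nf
  · congr 1
    · ring
    · ring

lemma M_mul_gaussian_kernel (ha : a ≠ 0) {s : ℝ} (hs : 0 < s) (m z : ℝ) :
    M a δ b w z * ((√(2 * π) * s)⁻¹ * exp (-(z - m) ^ 2 / (2 * s ^ 2)))
      = M a δ b w m * exp (bondLoading a w ^ 2 * s ^ 2 / 2) * ((√(2 * π) * s)⁻¹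
        * exp (-(z - (m - bondLoading a w * s ^ 2)) ^ 2 / (2 * s ^ 2))) := by
  rw [M_eq_mul_exp ha m (r := z)]
  have : exp (bondLoading a w * (m - z)) * exp (-(z - m) ^ 2 / (2 * s ^ 2))
      = exp (bondLoading a w ^ 2 * s ^ 2 / 2)
        * exp (-(z - (m - bondLoading a w * s ^ 2)) ^ 2 / (2 * s ^ 2)) := by
    rw [← exp_add, ← exp_add]
    congr 1
    field_simp
    ring
  linear_combination M a δ b w m * (√(2 * π) * s)⁻¹ * this

lemma inner_integral_eq (ha : 0 < a) (hδ : 0 < δ) (hu : 0 < u) :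
    ∫ z in Ioi (barrier a δ b (τ - u)),
      M a δ b u r * (1 - M a δ b (τ - u) z) * phiKer a δ b z u r = innerVal a δ b τ r u := by
  have hs := kernelStd_pos ha hδ hu
  have h : ∀ z, M a δ b u r * (1 - M a δ b (τ - u) z) * phiKer a δ b z u r
      = M a δ b u r * ((√(2 * π) * kernelStd a δ u)⁻¹
        * exp (-(z - kernelMean a δ b u r) ^ 2 / (2 * kernelStd a δ u ^ 2)))
        - M a δ b τ r * ((√(2 * π) * kernelStd a δ u)⁻¹
        * exp (-(z - (kernelMean a δ b u r - bondLoading a (τ - u) * kernelStd a δ u ^ 2)) ^ 2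
          / (2 * kernelStd a δ u ^ 2))) := by
    intro z
    have h1 := M_mul_gaussian_kernel (δ := δ) (b := b) (w := τ - u) ha.ne' hs
      (kernelMean a δ b u r) z
    have h2 := M_mul_M_kernelMean (b := b) (r := r) (w := τ - u) ha hδ hu
    rw [add_sub_cancel] at h2
    rw [phiKer_eq z ha hδ hu, ← h2]
    linear_combination - M a δ b u r * h1
  simp_rw [h]
  rw [MeasureTheory.integral_sub, MeasureTheory.integral_const_mul (M a δ b u r),
    MeasureTheory.integral_const_mul (M a δ b τ r), integral_Ioi_gaussian_kernel hs,
    integral_Ioi_gaussian_kernel hs, innerVal, barrierDist]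
  · congr 3
    field_simp
    ring
  · exact ((integrable_gaussian_kernel hs _).const_mul _).integrableOn
  · exact ((integrable_gaussian_kernel hs _).const_mul _).integrableOn

lemma gammaFun_eq (ha : 0 < a) (hδ : 0 < δ) {T t : ℝ} (ht : t ≤ T) :
    gammaFun a δ b T t r = ∫ u in (0:ℝ)..(T - t), innerVal a δ b (T - t) r u := by
  refine integral_congr_ae (ae_of_all _ fun u hu => ?_)
  rw [uIoc_of_le (by linarith)] at hu
  rw [← inner_integral_eq ha hδ hu.1, alphaCurve_eq_barrier]
  ring_nf

/-- The two boundary densities agree because `M = 1` on the barrier. -/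
lemma M_mul_normalDensity (ha : 0 < a) (hδ : 0 < δ) (hu : 0 < u) (hw : u < τ) :
    M a δ b τ r * normalDensity
        (barrierDist a δ b τ r u - bondLoading a (τ - u) * kernelStd a δ u)
      = M a δ b u r * normalDensity (barrierDist a δ b τ r u) := by
  have hs := kernelStd_pos ha hδ hu
  have h1 := M_barrier (δ := δ) (b := b) ha (sub_pos.2 hw)
  have h2 := M_mul_M_kernelMean (b := b) (r := r) (w := τ - u) ha hδ hu
  rw [add_sub_cancel] at h2
  rw [M_eq_mul_exp ha.ne' (kernelMean a δ b u r)] at h1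
  rw [← h2]
  have hd : kernelMean a δ b u r - barrier a δ b (τ - u)
      = barrierDist a δ b τ r u * kernelStd a δ u := by
    rw [barrierDist]; field_simp
  rw [hd] at h1
  set d := barrierDist a δ b τ r u
  set s := kernelStd a δ u
  set B := bondLoading a (τ - u)
  have h3 : exp (B ^ 2 * s ^ 2 / 2) * exp (-(d - B * s) ^ 2 / 2)
      = exp (B * (d * s)) * exp (-d ^ 2 / 2) := by
    rw [← exp_add, ← exp_add]
    congr 1
    ring
  rw [normalDensity, normalDensity]
  linear_combination M a δ b u r * M a δ b (τ - u) (kernelMean a δ b u r) * (√(2 * π))⁻¹ * h3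
    + M a δ b u r * (√(2 * π))⁻¹ * exp (-d ^ 2 / 2) * h1

/-- The derivative of `kernelStd`. -/
noncomputable def kernelStdDeriv (a δ u : ℝ) : ℝ :=
  δ ^ 2 * exp (-(a * u)) ^ 2 / (2 * kernelStd a δ u)

/-- The common boundary density `M(u,r) n(d)`. -/
noncomputable def boundaryDensity (a δ b τ r u : ℝ) : ℝ :=
  M a δ b u r * normalDensity (barrierDist a δ b τ r u)

/-- The derivative of `innerVal` in the rate `r`. -/
noncomputable def innerRateDeriv (a δ b τ r u : ℝ) : ℝ :=
  -bondLoading a u * M a δ b u r * normalCdf (barrierDist a δ b τ r u)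
    + bondLoading a τ * M a δ b τ r * normalCdf
        (barrierDist a δ b τ r u - bondLoading a (τ - u) * kernelStd a δ u)

/-- The second derivative of `innerVal` in the rate `r`. -/
noncomputable def innerRateDeriv₂ (a δ b τ r u : ℝ) : ℝ :=
  bondLoading a u ^ 2 * M a δ b u r * normalCdf (barrierDist a δ b τ r u)
    - bondLoading a τ ^ 2 * M a δ b τ r * normalCdf
        (barrierDist a δ b τ r u - bondLoading a (τ - u) * kernelStd a δ u)
    + 2 / δ ^ 2 * bondLoading a (τ - u) * boundaryDensity a δ b τ r u * kernelStdDeriv a δ u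

/-- The derivative of `innerVal` in the time to maturity `τ`. -/
noncomputable def innerTimeDeriv (a δ b τ r u : ℝ) : ℝ :=
  boundaryDensity a δ b τ r u * exp (-(a * (τ - u))) * kernelStd a δ u
    - bondRate a δ b τ r * M a δ b τ r * normalCdf
        (barrierDist a δ b τ r u - bondLoading a (τ - u) * kernelStd a δ u)

/-- The derivative of `innerVal` in `u`. -/
noncomputable def innerLagDeriv (a δ b τ r u : ℝ) : ℝ :=
  bondRate a δ b u r * M a δ b u r * normalCdf (barrierDist a δ b τ r u)
    + boundaryDensity a δ b τ r u * (bondLoading a (τ - u) * kernelStdDeriv a δ u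
      - exp (-(a * (τ - u))) * kernelStd a δ u)

lemma innerLagDeriv_eq (hδ : δ ≠ 0) : innerLagDeriv a δ b τ r u =
    a * (b - r) * innerRateDeriv a δ b τ r u + δ ^ 2 / 2 * innerRateDeriv₂ a δ b τ r u
      - r * innerVal a δ b τ r u - innerTimeDeriv a δ b τ r u := by
  simp only [innerLagDeriv, innerRateDeriv, innerRateDeriv₂, innerVal, innerTimeDeriv, bondRate]
  field_simp
  ring

lemma hasDerivAt_barrierDist_rate : HasDerivAt (fun r => barrierDist a δ b τ r u)
    (exp (-(a * u)) / kernelStd a δ u) r := by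
  have h := (((((hasDerivAt_id r).mul_const (exp (-(a * u)))).add_const
    (b * (1 - exp (-(a * u))))).sub_const
    (δ ^ 2 / (2 * a ^ 2) * (1 - exp (-(a * u))) ^ 2)).sub_const
    (barrier a δ b (τ - u))).div_const (kernelStd a δ u)
  exact h.congr_deriv (by rw [one_mul])

lemma hasDerivAt_innerVal_rate (ha : 0 < a) (hδ : 0 < δ) (hu : 0 < u) (hw : u < τ) :
    HasDerivAt (fun r => innerVal a δ b τ r u) (innerRateDeriv a δ b τ r u) r := by
  have hd := hasDerivAt_barrierDist_rate (a := a) (δ := δ) (b := b) (τ := τ) (r := r) (u := u)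
  have hM : ∀ w, HasDerivAt (fun r => M a δ b w r) (-bondLoading a w * M a δ b w r) r :=
    fun w => hasDerivAt_M_rate
  have h := ((hM u).mul ((hasDerivAt_normalCdf _).comp r hd)).sub
    ((hM τ).mul ((hasDerivAt_normalCdf _).comp r
      (hd.sub_const (bondLoading a (τ - u) * kernelStd a δ u))))
  refine h.congr_deriv ?_
  have hk := M_mul_normalDensity (b := b) (r := r) ha hδ hu hw
  simp only [Function.comp_apply, innerRateDeriv]
  linear_combination (-exp (-(a * u)) / kernelStd a δ u) * hk

lemma hasDerivAt_innerRateDeriv (ha : 0 < a) (hδ : 0 < δ) (hu : 0 < u) (hw : u < τ) :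
    HasDerivAt (fun r => innerRateDeriv a δ b τ r u) (innerRateDeriv₂ a δ b τ r u) r := by
  have hd := hasDerivAt_barrierDist_rate (a := a) (δ := δ) (b := b) (τ := τ) (r := r) (u := u)
  have hM : ∀ w, HasDerivAt (fun r => M a δ b w r) (-bondLoading a w * M a δ b w r) r :=
    fun w => hasDerivAt_M_rate
  have h := (((hM u).const_mul (-bondLoading a u)).mul
    ((hasDerivAt_normalCdf _).comp r hd)).add
    (((hM τ).const_mul (bondLoading a τ)).mul ((hasDerivAt_normalCdf _).comp r
      (hd.sub_const (bondLoading a (τ - u) * kernelStd a δ u))))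
  refine h.congr_deriv ?_
  have hk := M_mul_normalDensity (b := b) (r := r) ha hδ hu hw
  have hs := kernelStd_pos ha hδ hu
  have hB : 2 / δ ^ 2 * bondLoading a (τ - u) * kernelStdDeriv a δ u
      = (bondLoading a τ - bondLoading a u) * (exp (-(a * u)) / kernelStd a δ u) := by
    rw [bondLoading_sub ha.ne', kernelStdDeriv]
    field_simp
  simp only [Function.comp_apply, innerRateDeriv₂, boundaryDensity]
  linear_combination (bondLoading a τ * exp (-(a * u)) / kernelStd a δ u) * hk
    - M a δ b u r * normalDensity (barrierDist a δ b τ r u) * hB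

lemma hasDerivAt_innerVal_time (ha : 0 < a) (hδ : 0 < δ) (hu : 0 < u) (hw : u < τ) :
    HasDerivAt (fun τ => innerVal a δ b τ r u) (innerTimeDeriv a δ b τ r u) τ := by
  obtain ⟨d', hd⟩ : ∃ d', HasDerivAt (fun τ => barrierDist a δ b τ r u) d' τ := by
    have := (differentiableAt_barrier (δ := δ) (b := b) ha (sub_pos.2 hw)).hasDerivAt
    exact ⟨_, ((this.comp_sub_const τ u).const_sub (kernelMean a δ b u r)).div_const
      (kernelStd a δ u)⟩
  have hB := ((hasDerivAt_bondLoading ha.ne' (τ - u)).comp_sub_const τ u).mul_const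
    (kernelStd a δ u)
  have h := (((hasDerivAt_normalCdf _).comp τ hd).const_mul (M a δ b u r)).sub
    ((hasDerivAt_M_time (δ := δ) (b := b) (r := r) ha.ne').mul
      ((hasDerivAt_normalCdf _).comp τ (hd.sub hB)))
  refine h.congr_deriv ?_
  have hk := M_mul_normalDensity (b := b) (r := r) ha hδ hu hw
  simp only [Function.comp_apply, innerTimeDeriv, boundaryDensity, Pi.sub_apply]
  linear_combination (-d' + exp (-(a * (τ - u))) * kernelStd a δ u) * hk

lemma hasDerivAt_innerVal_lag (ha : 0 < a) (hδ : 0 < δ) (hu : 0 < u) (hw : u < τ) :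
    HasDerivAt (fun u => innerVal a δ b τ r u) (innerLagDeriv a δ b τ r u) u := by
  have hs := kernelStd_pos ha hδ hu
  have hs' : HasDerivAt (kernelStd a δ) (kernelStdDeriv a δ u) u := hasDerivAt_kernelStd ha hδ hu
  obtain ⟨d', hd⟩ : ∃ d', HasDerivAt (fun u => barrierDist a δ b τ r u) d' u := by
    have h1 := (differentiableAt_barrier (δ := δ) (b := b) ha (sub_pos.2 hw)).hasDerivAt
    have h2 : DifferentiableAt ℝ (fun u => kernelMean a δ b u r) u := by
      unfold kernelMean; fun_prop
    exact ⟨_, (h2.hasDerivAt.sub (h1.comp_const_sub τ u)).div hs' hs.ne'⟩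
  have hB := ((hasDerivAt_bondLoading ha.ne' (τ - u)).comp_const_sub τ u).mul hs'
  have h := ((hasDerivAt_M_time (δ := δ) (b := b) (r := r) ha.ne').mul
    ((hasDerivAt_normalCdf _).comp u hd)).sub
    (((hasDerivAt_normalCdf _).comp u (hd.sub hB)).const_mul (M a δ b τ r))
  refine h.congr_deriv ?_
  have hk := M_mul_normalDensity (b := b) (r := r) ha hδ hu hw
  simp only [Function.comp_apply, innerLagDeriv, boundaryDensity, Pi.sub_apply, Pi.mul_apply]
  linear_combination (-d' - exp (-(a * (τ - u))) * kernelStd a δ u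
    + bondLoading a (τ - u) * kernelStdDeriv a δ u) * hk

@[fun_prop]
lemma measurable_normalCdf : Measurable normalCdf := continuous_normalCdf.measurable

@[fun_prop]
lemma measurable_normalDensity : Measurable normalDensity := continuous_normalDensity.measurable

@[fun_prop]
lemma measurable_barrierDist : Measurable (barrierDist a δ b τ r) := by
  unfold barrierDist kernelMean kernelStd barrier alphaCurve
  fun_prop

lemma measurable_innerVal : Measurable (innerVal a δ b τ r) := by
  unfold innerVal M bondLoading kernelStd
  fun_prop

lemma measurable_innerRateDeriv : Measurable (innerRateDeriv a δ b τ r) := by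
  unfold innerRateDeriv M bondLoading kernelStd
  fun_prop

lemma measurable_innerRateDeriv₂ : Measurable (innerRateDeriv₂ a δ b τ r) := by
  unfold innerRateDeriv₂ boundaryDensity kernelStdDeriv M bondLoading kernelStd
  fun_prop

lemma measurable_innerTimeDeriv : Measurable (innerTimeDeriv a δ b τ r) := by
  unfold innerTimeDeriv boundaryDensity M bondLoading kernelStd
  fun_prop

/-- Uniform bounds for the coefficients on a compact set of times and rates. -/
def CoeffBound (a δ b R K : ℝ) : Prop :=
  1 / a ≤ K ∧ ∀ u ∈ Icc 0 R, ∀ r ∈ Icc (-R) R,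
    M a δ b u r ≤ K ∧ |bondRate a δ b u r| ≤ K ∧ kernelStd a δ u ≤ K

lemma exists_coeffBound (a δ b R : ℝ) : ∃ K, CoeffBound a δ b R K := by
  have hc : IsCompact (Icc (0:ℝ) R ×ˢ Icc (-R) R) := isCompact_Icc.prod isCompact_Icc
  obtain ⟨K₁, h₁⟩ := hc.exists_bound_of_continuousOn (f := fun p => M a δ b p.1 p.2)
    (by unfold M; fun_prop)
  obtain ⟨K₂, h₂⟩ := hc.exists_bound_of_continuousOn (f := fun p => bondRate a δ b p.1 p.2)
    (by unfold bondRate bondLoading; fun_prop)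
  obtain ⟨K₃, h₃⟩ := hc.exists_bound_of_continuousOn (f := fun p => kernelStd a δ p.1)
    (by unfold kernelStd; fun_prop)
  refine ⟨max (1 / a) (max K₁ (max K₂ K₃)), le_max_left _ _, fun u hu r hr => ⟨?_, ?_, ?_⟩⟩
  · exact (le_abs_self _).trans ((h₁ (u, r) ⟨hu, hr⟩).trans (by simp))
  · exact (h₂ (u, r) ⟨hu, hr⟩).trans (by simp)
  · exact (le_abs_self _).trans ((h₃ (u, r) ⟨hu, hr⟩).trans (by simp))

lemma abs_mul_le_mul {x y A B : ℝ} (hx : |x| ≤ A) (hy : |y| ≤ B) : |x * y| ≤ A * B := by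
  rw [abs_mul]
  exact mul_le_mul hx hy (abs_nonneg _) ((abs_nonneg _).trans hx)

lemma abs_normalCdf_le_one (x : ℝ) : |normalCdf x| ≤ 1 := by
  rw [abs_of_nonneg (normalCdf_nonneg x)]; exact normalCdf_le_one x

lemma abs_normalDensity_le_one (x : ℝ) : |normalDensity x| ≤ 1 := by
  rw [abs_of_nonneg (normalDensity_nonneg x)]; exact normalDensity_le_one x

lemma kernelStdDeriv_nonneg : 0 ≤ kernelStdDeriv a δ u := by
  have : 0 ≤ kernelStd a δ u := sqrt_nonneg _
  unfold kernelStdDeriv; positivity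

section Bounds

variable {R K : ℝ}

lemma CoeffBound.abs_M_le (h : CoeffBound a δ b R K) (hu : u ∈ Icc 0 R) (hr : r ∈ Icc (-R) R) :
    |M a δ b u r| ≤ K := by
  rw [abs_of_pos M_pos]; exact (h.2 u hu r hr).1

lemma CoeffBound.abs_bondLoading_le (h : CoeffBound a δ b R K) (ha : 0 < a) (hu : 0 ≤ u) :
    |bondLoading a u| ≤ K := by
  rw [abs_of_nonneg (bondLoading_nonneg ha hu)]
  refine le_trans ?_ h.1
  unfold bondLoading
  gcongr
  linarith [exp_pos (-(a * u))]

lemma CoeffBound.abs_kernelStd_le (h : CoeffBound a δ b R K) (hu : u ∈ Icc 0 R)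
    (hr : r ∈ Icc (-R) R) : |kernelStd a δ u| ≤ K := by
  rw [kernelStd, abs_of_nonneg (sqrt_nonneg _)]; exact (h.2 u hu r hr).2.2

lemma CoeffBound.abs_boundaryDensity_le (h : CoeffBound a δ b R K) (hu : u ∈ Icc 0 R)
    (hr : r ∈ Icc (-R) R) : |boundaryDensity a δ b τ r u| ≤ K := by
  have := abs_mul_le_mul (h.abs_M_le hu hr) (abs_normalDensity_le_one (barrierDist a δ b τ r u))
  rwa [mul_one] at this

lemma CoeffBound.abs_innerRateDeriv_le (h : CoeffBound a δ b R K) (ha : 0 < a) (hu : 0 < u)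
    (hw : u < τ) (hτ : τ ≤ R) (hr : r ∈ Icc (-R) R) :
    |innerRateDeriv a δ b τ r u| ≤ 2 * K ^ 2 := by
  have h1 := abs_mul_le_mul (abs_mul_le_mul ((abs_neg _).trans_le
    (h.abs_bondLoading_le ha hu.le)) (h.abs_M_le ⟨hu.le, (hw.trans_le hτ).le⟩ hr))
    (abs_normalCdf_le_one (barrierDist a δ b τ r u))
  have h2 := abs_mul_le_mul (abs_mul_le_mul (h.abs_bondLoading_le ha (hu.trans hw).le)
    (h.abs_M_le ⟨(hu.trans hw).le, hτ⟩ hr)) (abs_normalCdf_le_one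
    (barrierDist a δ b τ r u - bondLoading a (τ - u) * kernelStd a δ u))
  refine (abs_add_le _ _).trans ?_
  linarith

lemma CoeffBound.abs_innerRateDeriv₂_le (h : CoeffBound a δ b R K) (ha : 0 < a) (hu : 0 < u)
    (hw : u < τ) (hτ : τ ≤ R) (hr : r ∈ Icc (-R) R) :
    |innerRateDeriv₂ a δ b τ r u| ≤ 2 * K ^ 3 + 2 / δ ^ 2 * K * K * kernelStdDeriv a δ u := by
  have hB : ∀ w, 0 ≤ w → |bondLoading a w ^ 2| ≤ K ^ 2 := fun w hw => by
    rw [abs_pow]; exact pow_le_pow_left₀ (abs_nonneg _) (h.abs_bondLoading_le ha hw) 2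
  have hu' : u ∈ Icc 0 R := ⟨hu.le, (hw.trans_le hτ).le⟩
  have h1 := abs_mul_le_mul (abs_mul_le_mul (hB u hu.le) (h.abs_M_le hu' hr))
    (abs_normalCdf_le_one (barrierDist a δ b τ r u))
  have h2 := abs_mul_le_mul (abs_mul_le_mul (hB τ (hu.trans hw).le)
    (h.abs_M_le ⟨(hu.trans hw).le, hτ⟩ hr)) (abs_normalCdf_le_one
    (barrierDist a δ b τ r u - bondLoading a (τ - u) * kernelStd a δ u))
  have h3 := abs_mul_le_mul (abs_mul_le_mul (abs_mul_le_mul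
    (abs_of_nonneg (by positivity : 0 ≤ 2 / δ ^ 2)).le
    (h.abs_bondLoading_le ha (sub_pos.2 hw).le)) (h.abs_boundaryDensity_le (τ := τ) hu' hr))
    (abs_of_nonneg (kernelStdDeriv_nonneg (a := a) (δ := δ) (u := u))).le
  refine (abs_add_le _ _).trans (add_le_add ((abs_sub _ _).trans ?_) h3)
  linarith

lemma CoeffBound.abs_innerTimeDeriv_le (h : CoeffBound a δ b R K) (ha : 0 < a) (hu : 0 < u)
    (hw : u < τ) (hτ : τ ≤ R) (hr : r ∈ Icc (-R) R) :
    |innerTimeDeriv a δ b τ r u| ≤ 2 * K ^ 2 := by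
  have hu' : u ∈ Icc 0 R := ⟨hu.le, (hw.trans_le hτ).le⟩
  have hE : |exp (-(a * (τ - u)))| ≤ 1 := by
    rw [abs_exp, exp_le_one_iff]; nlinarith
  have hτ' : τ ∈ Icc 0 R := ⟨(hu.trans hw).le, hτ⟩
  have h1 := abs_mul_le_mul (abs_mul_le_mul (h.abs_boundaryDensity_le (τ := τ) hu' hr) hE)
    (h.abs_kernelStd_le hu' hr)
  have h2 := abs_mul_le_mul (abs_mul_le_mul (h.2 τ hτ' r hr).2.1 (h.abs_M_le hτ' hr))
    (abs_normalCdf_le_one (barrierDist a δ b τ r u - bondLoading a (τ - u) * kernelStd a δ u))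
  refine (abs_sub _ _).trans ?_
  linarith

lemma CoeffBound.abs_innerVal_le (h : CoeffBound a δ b R K) (ha : 0 < a) (hu : 0 < u)
    (hw : u < τ) (hτ : τ ≤ R) (hr : r ∈ Icc (-R) R) :
    |innerVal a δ b τ r u| ≤ 2 * K ^ 2 * (τ - u) := by
  have hτ' : τ ∈ Icc 0 R := ⟨(hu.trans hw).le, hτ⟩
  have hu' : u ∈ Icc 0 R := ⟨hu.le, (hw.trans_le hτ).le⟩
  have hM : |M a δ b τ r - M a δ b u r| ≤ K * K * |τ - u| :=
    Convex.norm_image_sub_le_of_norm_hasDerivWithin_le (s := Icc u τ)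
      (f' := fun v => bondRate a δ b v r * M a δ b v r)
      (fun v _ => (hasDerivAt_M_time ha.ne').hasDerivWithinAt)
      (fun v hv => abs_mul_le_mul (h.2 v ⟨hu.le.trans hv.1, hv.2.trans hτ⟩ r hr).2.1
        (h.abs_M_le ⟨hu.le.trans hv.1, hv.2.trans hτ⟩ hr))
      (convex_Icc u τ) (left_mem_Icc.2 hw.le) (right_mem_Icc.2 hw.le)
  rw [abs_of_pos (sub_pos.2 hw)] at hM
  have hN := abs_normalCdf_sub_le (barrierDist a δ b τ r u)
    (barrierDist a δ b τ r u - bondLoading a (τ - u) * kernelStd a δ u)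
  rw [sub_sub_cancel] at hN
  have hB : |bondLoading a (τ - u)| ≤ τ - u := by
    rw [abs_of_nonneg (bondLoading_nonneg ha (sub_pos.2 hw).le)]; exact bondLoading_le ha _
  have h1 := abs_mul_le_mul hM (abs_normalCdf_le_one (barrierDist a δ b τ r u))
  have h2 := abs_mul_le_mul (h.abs_M_le hτ' hr) (hN.trans
    (abs_mul_le_mul hB (h.abs_kernelStd_le hu' hr)))
  have : innerVal a δ b τ r u
      = M a δ b τ r * (normalCdf (barrierDist a δ b τ r u) - normalCdf
        (barrierDist a δ b τ r u - bondLoading a (τ - u) * kernelStd a δ u))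
        - (M a δ b τ r - M a δ b u r) * normalCdf (barrierDist a δ b τ r u) := by
    rw [innerVal]; ring
  rw [this]
  refine (abs_sub _ _).trans ?_
  linarith

end Bounds

/-- Differentiation of an integral with moving endpoint and integrand vanishing there. -/
lemma hasDerivAt_integral_of_vanishing {F F' : ℝ → ℝ → ℝ} {K τ₀ R : ℝ} (h0 : 0 < τ₀) (hR : τ₀ < R)
    (hmeas : ∀ τ, Measurable (F τ)) (hmeas' : Measurable (F' τ₀))
    (hd : ∀ τ u, 0 < u → u < τ → τ < R → HasDerivAt (fun τ => F τ u) (F' τ u) τ)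
    (hb : ∀ τ u, 0 < u → u < τ → τ < R → |F' τ u| ≤ K)
    (hz : ∀ τ u, 0 < u → u < τ → τ < R → |F τ u| ≤ K * (τ - u)) :
    HasDerivAt (fun τ => ∫ u in (0:ℝ)..τ, F τ u) (∫ u in (0:ℝ)..τ₀, F' τ₀ u) τ₀ := by
  have hK : 0 ≤ K := (abs_nonneg _).trans (hb τ₀ (τ₀ / 2) (by linarith) (by linarith) hR)
  have hRpos : 0 < R := h0.trans hR
  have key : ∀ τ ∈ Ioo 0 R, ∀ f : ℝ → ℝ,
      ∫ u in (0:ℝ)..R, (Iio τ).indicator f u = ∫ u in (0:ℝ)..τ, f u := by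
    intro τ hτ f
    rw [integral_of_le hRpos.le, integral_of_le hτ.1.le, setIntegral_indicator measurableSet_Iio,
      integral_Ioc_eq_integral_Ioo]
    congr 2
    ext u
    simp only [mem_inter_iff, mem_Ioc, mem_Iio, mem_Ioo]
    exact ⟨fun h => ⟨h.1.1, h.2⟩, fun h => ⟨⟨h.1, (h.2.trans hτ.2).le⟩, h.2⟩⟩
  have hs : Ioo 0 R ∈ 𝓝 τ₀ := Ioo_mem_nhds h0 hR
  have main := hasDerivAt_integral_of_dominated_loc_of_lip (μ := volume) (a := 0) (b := R)
    (F := fun τ => (Iio τ).indicator (F τ)) (F' := (Iio τ₀).indicator (F' τ₀))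
    (bound := fun _ => K) hs
    (Eventually.of_forall fun τ => ((hmeas τ).indicator measurableSet_Iio).aestronglyMeasurable)
    ?_ (hmeas'.indicator measurableSet_Iio).aestronglyMeasurable ?_ intervalIntegrable_const ?_
  · rw [key τ₀ ⟨h0, hR⟩] at main
    refine main.2.congr_of_eventuallyEq ?_
    filter_upwards [hs] with τ hτ
    exact (key τ hτ _).symm
  · refine (intervalIntegrable_const (c := K * R)).mono_fun'
      ((hmeas τ₀).indicator measurableSet_Iio).aestronglyMeasurable ?_
    rw [uIoc_of_le hRpos.le, EventuallyLE, ae_restrict_iff' measurableSet_Ioc]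
    refine ae_of_all _ fun u hu => ?_
    by_cases h : u < τ₀
    · rw [indicator_of_mem (mem_Iio.2 h)]
      exact (hz τ₀ u hu.1 h hR).trans (by gcongr; linarith [hu.1])
    · rw [indicator_of_notMem (by simpa using h), norm_zero]
      positivity
  · refine ae_of_all _ fun u hu => ?_
    rw [uIoc_of_le hRpos.le] at hu
    have hle : ∀ τ₁ τ₂, τ₁ ≤ τ₂ → τ₂ < R →
        |(Iio τ₂).indicator (F τ₂) u - (Iio τ₁).indicator (F τ₁) u| ≤ K * (τ₂ - τ₁) := by
      intro τ₁ τ₂ h12 h2R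
      by_cases h1 : u < τ₁
      · rw [indicator_of_mem (mem_Iio.2 h1), indicator_of_mem (mem_Iio.2 (h1.trans_le h12))]
        have := Convex.norm_image_sub_le_of_norm_hasDerivWithin_le (s := Icc τ₁ τ₂) (C := K)
          (f := fun τ => F τ u) (f' := fun τ => F' τ u) (x := τ₁) (y := τ₂)
          (fun τ hτ => (hd τ u hu.1 (h1.trans_le hτ.1) (hτ.2.trans_lt h2R)).hasDerivWithinAt)
          (fun τ hτ => hb τ u hu.1 (h1.trans_le hτ.1) (hτ.2.trans_lt h2R))
          (convex_Icc _ _) (left_mem_Icc.2 h12) (right_mem_Icc.2 h12)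
        rwa [norm_eq_abs, norm_eq_abs, abs_of_nonneg (sub_nonneg.2 h12)] at this
      · rw [indicator_of_notMem (s := Iio τ₁) (by simpa using h1), sub_zero]
        by_cases h2 : u < τ₂
        · rw [indicator_of_mem (mem_Iio.2 h2)]
          exact (hz τ₂ u hu.1 h2 h2R).trans (by gcongr; linarith)
        · rw [indicator_of_notMem (by simpa using h2), abs_zero]
          exact mul_nonneg hK (sub_nonneg.2 h12)
    refine LipschitzOnWith.of_dist_le_mul fun τ₁ h₁ τ₂ h₂ => ?_
    rw [coe_nnabs, abs_of_nonneg hK, dist_eq, dist_eq]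
    rcases le_total τ₁ τ₂ with h | h
    · rw [abs_sub_comm, abs_sub_comm τ₁, abs_of_nonneg (sub_nonneg.2 h)]
      exact hle _ _ h h₂.2
    · rw [abs_of_nonneg (sub_nonneg.2 h)]
      exact hle _ _ h h₁.2
  · filter_upwards [compl_mem_ae_iff.2 (measure_singleton τ₀)] with u hne hu
    rw [uIoc_of_le hRpos.le] at hu
    rcases lt_or_gt_of_ne (show u ≠ τ₀ from hne) with h | h
    · rw [indicator_of_mem (mem_Iio.2 h)]
      refine (hd τ₀ u hu.1 h hR).congr_of_eventuallyEq ?_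
      filter_upwards [Ioi_mem_nhds h] with τ hτ
      exact indicator_of_mem (mem_Iio.2 hτ) _
    · rw [indicator_of_notMem (by simpa using h.le)]
      refine (hasDerivAt_const τ₀ (0:ℝ)).congr_of_eventuallyEq ?_
      filter_upwards [Iio_mem_nhds h] with τ hτ
      exact indicator_of_notMem (by simpa using (mem_Iio.1 hτ).le) _

/-- The function `γ` in terms of the time to maturity. -/
noncomputable def timeValue (a δ b τ r : ℝ) : ℝ := ∫ u in (0:ℝ)..τ, innerVal a δ b τ r u

lemma ae_mem_Ioo_of_mem_uIoc (hτ : 0 ≤ τ) : ∀ᵐ u, u ∈ uIoc 0 τ → u ∈ Ioo 0 τ := by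
  filter_upwards [compl_mem_ae_iff.2 (measure_singleton τ)] with u hne hu
  rw [uIoc_of_le hτ] at hu
  exact ⟨hu.1, hu.2.lt_of_ne hne⟩

lemma intervalIntegrable_of_abs_le {f g : ℝ → ℝ} (hτ : 0 ≤ τ) (hf : Measurable f)
    (hg : IntervalIntegrable g volume 0 τ) (h : ∀ u ∈ Ioo 0 τ, |f u| ≤ g u) :
    IntervalIntegrable f volume 0 τ := by
  refine hg.mono_fun' hf.aestronglyMeasurable ?_
  rw [EventuallyLE, ae_restrict_iff' measurableSet_uIoc]
  filter_upwards [ae_mem_Ioo_of_mem_uIoc hτ] with u hu hu'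
  exact h u (hu hu')

lemma intervalIntegrable_kernelStdDeriv (ha : 0 < a) (hδ : 0 < δ) (hτ : 0 ≤ τ) :
    IntervalIntegrable (kernelStdDeriv a δ) volume 0 τ := by
  refine intervalIntegrable_deriv_of_nonneg (g := kernelStd a δ)
    (continuous_kernelStd (a := a) (δ := δ)).continuousOn (fun u hu => ?_)
    fun u _ => kernelStdDeriv_nonneg
  rw [min_eq_left hτ] at hu
  exact hasDerivAt_kernelStd ha hδ hu.1

/-- Differentiation under the integral sign on `(0, τ)` near `r`. -/
lemma hasDerivAt_integral_rate {F F' : ℝ → ℝ → ℝ} {g : ℝ → ℝ} {B : ℝ} (hτ : 0 < τ)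
    (hmeas : ∀ r, Measurable (F r)) (hmeas' : Measurable (F' r))
    (hg : IntervalIntegrable g volume 0 τ)
    (hF : ∀ u ∈ Ioo 0 τ, |F r u| ≤ B)
    (hb : ∀ u ∈ Ioo 0 τ, ∀ r' ∈ Ioo (r - 1) (r + 1), |F' r' u| ≤ g u)
    (hd : ∀ u ∈ Ioo 0 τ, ∀ r', HasDerivAt (fun r => F r u) (F' r' u) r') :
    IntervalIntegrable (F' r) volume 0 τ ∧
      HasDerivAt (fun r => ∫ u in (0:ℝ)..τ, F r u) (∫ u in (0:ℝ)..τ, F' r u) r := by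
  refine hasDerivAt_integral_of_dominated_loc_of_deriv_le (bound := g)
    (Ioo_mem_nhds (sub_one_lt r) (lt_add_one r))
    (Eventually.of_forall fun r => (hmeas r).aestronglyMeasurable)
    (intervalIntegrable_of_abs_le hτ.le (hmeas r) intervalIntegrable_const hF)
    hmeas'.aestronglyMeasurable ?_ hg ?_
  · filter_upwards [ae_mem_Ioo_of_mem_uIoc hτ.le] with u hu hu'
    exact hb u (hu hu')
  · filter_upwards [ae_mem_Ioo_of_mem_uIoc hτ.le] with u hu hu' r' _
    exact hd u (hu hu') r'

lemma exists_coeffBound_near (a δ b τ r : ℝ) : ∃ R K, CoeffBound a δ b R K ∧ τ < R ∧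
    ∀ r' ∈ Ioo (r - 1) (r + 1), r' ∈ Icc (-R) R := by
  obtain ⟨K, hK⟩ := exists_coeffBound a δ b (|τ| + |r| + 1)
  refine ⟨_, K, hK, ?_, fun r' hr' => ⟨?_, ?_⟩⟩
  · linarith [le_abs_self τ, abs_nonneg r]
  · linarith [neg_abs_le r, abs_nonneg τ, hr'.1]
  · linarith [le_abs_self r, abs_nonneg τ, hr'.2]

lemma hasDerivAt_timeValue_rate (ha : 0 < a) (hδ : 0 < δ) (hτ : 0 < τ) (r : ℝ) :
    IntervalIntegrable (innerRateDeriv a δ b τ r) volume 0 τ ∧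
      HasDerivAt (timeValue a δ b τ) (∫ u in (0:ℝ)..τ, innerRateDeriv a δ b τ r u) r := by
  obtain ⟨R, K, hK, hR, hr⟩ := exists_coeffBound_near a δ b τ r
  have hrr : r ∈ Ioo (r - 1) (r + 1) := ⟨sub_one_lt r, lt_add_one r⟩
  refine hasDerivAt_integral_rate (F := fun r u => innerVal a δ b τ r u)
    (F' := fun r u => innerRateDeriv a δ b τ r u) (g := fun _ => 2 * K ^ 2)
    (B := 2 * K ^ 2 * τ) hτ (fun _ => measurable_innerVal) measurable_innerRateDeriv
    intervalIntegrable_const (fun u hu => ?_) (fun u hu r' hr' => ?_) fun u hu r' => ?_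
  · refine (hK.abs_innerVal_le ha hu.1 hu.2 hR.le (hr r hrr)).trans ?_
    gcongr
    linarith [hu.1]
  · exact hK.abs_innerRateDeriv_le ha hu.1 hu.2 hR.le (hr r' hr')
  · exact hasDerivAt_innerVal_rate ha hδ hu.1 hu.2

lemma hasDerivAt_integral_innerRateDeriv (ha : 0 < a) (hδ : 0 < δ) (hτ : 0 < τ) (r : ℝ) :
    IntervalIntegrable (innerRateDeriv₂ a δ b τ r) volume 0 τ ∧
      HasDerivAt (fun r => ∫ u in (0:ℝ)..τ, innerRateDeriv a δ b τ r u)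
        (∫ u in (0:ℝ)..τ, innerRateDeriv₂ a δ b τ r u) r := by
  obtain ⟨R, K, hK, hR, hr⟩ := exists_coeffBound_near a δ b τ r
  have hrr : r ∈ Ioo (r - 1) (r + 1) := ⟨sub_one_lt r, lt_add_one r⟩
  refine hasDerivAt_integral_rate (F := fun r u => innerRateDeriv a δ b τ r u)
    (F' := fun r u => innerRateDeriv₂ a δ b τ r u)
    (g := fun u => 2 * K ^ 3 + 2 / δ ^ 2 * K * K * kernelStdDeriv a δ u)
    (B := 2 * K ^ 2) hτ (fun _ => measurable_innerRateDeriv) measurable_innerRateDeriv₂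
    (intervalIntegrable_const.add ((intervalIntegrable_kernelStdDeriv ha hδ hτ.le).const_mul _))
    (fun u hu => ?_) (fun u hu r' hr' => ?_) fun u hu r' => ?_
  · exact hK.abs_innerRateDeriv_le ha hu.1 hu.2 hR.le (hr r hrr)
  · exact hK.abs_innerRateDeriv₂_le ha hu.1 hu.2 hR.le (hr r' hr')
  · exact hasDerivAt_innerRateDeriv ha hδ hu.1 hu.2

lemma hasDerivAt_timeValue_time (ha : 0 < a) (hδ : 0 < δ) (hτ : 0 < τ) (r : ℝ) :
    HasDerivAt (fun τ => timeValue a δ b τ r) (∫ u in (0:ℝ)..τ, innerTimeDeriv a δ b τ r u) τ := by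
  obtain ⟨R, K, hK, hR, hr⟩ := exists_coeffBound_near a δ b τ r
  have hrr : r ∈ Icc (-R) R := hr r ⟨sub_one_lt r, lt_add_one r⟩
  exact hasDerivAt_integral_of_vanishing (F := fun τ u => innerVal a δ b τ r u)
    (F' := fun τ u => innerTimeDeriv a δ b τ r u) (K := 2 * K ^ 2) hτ hR
    (fun _ => measurable_innerVal) measurable_innerTimeDeriv
    (fun τ u h1 h2 _ => hasDerivAt_innerVal_time ha hδ h1 h2)
    (fun τ u h1 h2 h3 => hK.abs_innerTimeDeriv_le ha h1 h2 h3.le hrr)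
    (fun τ u h1 h2 h3 => hK.abs_innerVal_le ha h1 h2 h3.le hrr)

lemma intervalIntegrable_innerTimeDeriv (ha : 0 < a) (hτ : 0 < τ) :
    IntervalIntegrable (innerTimeDeriv a δ b τ r) volume 0 τ := by
  obtain ⟨R, K, hK, hR, hr⟩ := exists_coeffBound_near a δ b τ r
  exact intervalIntegrable_of_abs_le hτ.le measurable_innerTimeDeriv
    (intervalIntegrable_const (c := 2 * K ^ 2)) fun u hu =>
      hK.abs_innerTimeDeriv_le ha hu.1 hu.2 hR.le (hr r ⟨sub_one_lt r, lt_add_one r⟩)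

lemma intervalIntegrable_innerVal (ha : 0 < a) (hτ : 0 < τ) :
    IntervalIntegrable (innerVal a δ b τ r) volume 0 τ := by
  obtain ⟨R, K, hK, hR, hr⟩ := exists_coeffBound_near a δ b τ r
  refine intervalIntegrable_of_abs_le hτ.le measurable_innerVal
    (intervalIntegrable_const (c := 2 * K ^ 2 * τ)) fun u hu =>
      (hK.abs_innerVal_le ha hu.1 hu.2 hR.le (hr r ⟨sub_one_lt r, lt_add_one r⟩)).trans ?_
  gcongr
  linarith [hu.1]

lemma tendsto_innerVal_maturity (ha : 0 < a) (hτ : 0 < τ) :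
    Tendsto (innerVal a δ b τ r) (𝓝[<] τ) (𝓝 0) := by
  obtain ⟨R, K, hK, hR, hr⟩ := exists_coeffBound_near a δ b τ r
  have hlim : Tendsto (fun u => 2 * K ^ 2 * (τ - u)) (𝓝[<] τ) (𝓝 0) := by
    have : Continuous fun u => 2 * K ^ 2 * (τ - u) := by fun_prop
    simpa using (this.tendsto τ).mono_left nhdsWithin_le_nhds
  refine squeeze_zero_norm' ?_ hlim
  filter_upwards [Ioo_mem_nhdsLT hτ] with u hu
  exact hK.abs_innerVal_le ha hu.1 hu.2 hR.le (hr r ⟨sub_one_lt r, lt_add_one r⟩)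

lemma kernelStd_zero : kernelStd a δ 0 = 0 := by simp [kernelStd]

lemma tendsto_innerVal_zero (ha : 0 < a) (hδ : 0 < δ) (hτ : 0 < τ) :
    Tendsto (innerVal a δ b τ r) (𝓝[>] 0) (𝓝 (max (1 - M a δ b τ r) 0)) := by
  have hs : Tendsto (kernelStd a δ) (𝓝[>] 0) (𝓝 0) := by
    simpa [kernelStd_zero] using ((continuous_kernelStd (a := a) (δ := δ)).tendsto 0).mono_left
      (nhdsWithin_le_nhds (s := Ioi (0:ℝ)))
  have hB : Tendsto (fun u => bondLoading a (τ - u)) (𝓝[>] 0) (𝓝 (bondLoading a τ)) := by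
    have : Continuous fun u => bondLoading a (τ - u) := by unfold bondLoading; fun_prop
    simpa using (this.tendsto 0).mono_left (nhdsWithin_le_nhds (s := Ioi (0:ℝ)))
  have hM : Tendsto (fun u => M a δ b u r - M a δ b τ r) (𝓝[>] 0) (𝓝 (1 - M a δ b τ r)) := by
    have : Continuous fun u => M a δ b u r - M a δ b τ r := by unfold M; fun_prop
    simpa [M_zero] using (this.tendsto 0).mono_left (nhdsWithin_le_nhds (s := Ioi (0:ℝ)))
  have h2 : Tendsto (fun u => M a δ b τ r * (normalCdf (barrierDist a δ b τ r u) - normalCdf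
      (barrierDist a δ b τ r u - bondLoading a (τ - u) * kernelStd a δ u))) (𝓝[>] 0) (𝓝 0) := by
    rw [← mul_zero (M a δ b τ r)]
    refine Tendsto.const_mul _ (squeeze_zero_norm (fun u => abs_normalCdf_sub_le _ _) ?_)
    simpa using (hB.mul hs).abs
  have hnum : Tendsto (fun u => kernelMean a δ b u r - barrier a δ b (τ - u)) (𝓝[>] 0)
      (𝓝 (r - barrier a δ b τ)) := by
    have h1 : ContinuousAt (fun u => kernelMean a δ b u r) 0 := by
      unfold kernelMean; fun_prop
    have h2 : ContinuousAt (fun u => barrier a δ b (τ - u)) 0 := by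
      refine ContinuousAt.comp (g := barrier a δ b) ?_ (by fun_prop)
      rw [sub_zero]
      exact (differentiableAt_barrier ha hτ).continuousAt
    have h3 : Tendsto (fun u => kernelMean a δ b u r - barrier a δ b (τ - u)) (𝓝[>] 0)
        (𝓝 (kernelMean a δ b 0 r - barrier a δ b (τ - 0))) :=
      (h1.sub h2).tendsto.mono_left nhdsWithin_le_nhds
    have h0 : kernelMean a δ b 0 r = r := by simp [kernelMean]
    rwa [h0, sub_zero] at h3
  have hinv : Tendsto (fun u => (kernelStd a δ u)⁻¹) (𝓝[>] 0) atTop := by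
    refine tendsto_inv_nhdsGT_zero.comp (tendsto_nhdsWithin_iff.2 ⟨hs, ?_⟩)
    filter_upwards [self_mem_nhdsWithin] with u hu
    exact kernelStd_pos ha hδ hu
  have hBτ : 0 < bondLoading a τ := div_pos (one_sub_exp_pos ha hτ) ha
  have hMτ : M a δ b τ r = exp (bondLoading a τ * (barrier a δ b τ - r)) := by
    rw [M_eq_mul_exp ha.ne' (barrier a δ b τ), M_barrier ha hτ, one_mul]
  have h1 : Tendsto (fun u => (M a δ b u r - M a δ b τ r) * normalCdf (barrierDist a δ b τ r u))
      (𝓝[>] 0) (𝓝 (max (1 - M a δ b τ r) 0)) := by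
    rcases lt_trichotomy (barrier a δ b τ) r with hlt | heq | hgt
    · have : M a δ b τ r ≤ 1 := by
        rw [hMτ, exp_le_one_iff]; nlinarith
      rw [max_eq_left (by linarith)]
      simpa [barrierDist, div_eq_mul_inv] using hM.mul (tendsto_normalCdf_atTop.comp
        (hnum.pos_mul_atTop (sub_pos.2 hlt) hinv))
    · have : 1 - M a δ b τ r = 0 := by rw [hMτ, heq]; simp
      rw [this, max_self]
      refine squeeze_zero_norm (fun u => ?_) (by simpa [this] using hM.abs)
      simpa using abs_mul_le_mul le_rfl (abs_normalCdf_le_one (barrierDist a δ b τ r u))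
    · have : 1 ≤ M a δ b τ r := by
        rw [hMτ, one_le_exp_iff]; nlinarith
      rw [max_eq_right (by linarith)]
      simpa [barrierDist, div_eq_mul_inv] using hM.mul (tendsto_normalCdf_atBot.comp
        (hnum.neg_mul_atTop (sub_neg.2 hgt) hinv))
  have := h1.add h2
  rw [add_zero] at this
  refine this.congr fun u => ?_
  rw [innerVal]; ring

/-- The inhomogeneous Vasicek pricing equation for `γ`. -/
lemma timeValue_equation (ha : 0 < a) (hδ : 0 < δ) (hτ : 0 < τ) :
    a * (b - r) * (∫ u in (0:ℝ)..τ, innerRateDeriv a δ b τ r u)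
      + δ ^ 2 / 2 * (∫ u in (0:ℝ)..τ, innerRateDeriv₂ a δ b τ r u)
      - r * timeValue a δ b τ r - (∫ u in (0:ℝ)..τ, innerTimeDeriv a δ b τ r u)
      = -max (1 - M a δ b τ r) 0 := by
  have i1 := (hasDerivAt_timeValue_rate (b := b) ha hδ hτ r).1.const_mul (a * (b - r))
  have i2 := (hasDerivAt_integral_innerRateDeriv (b := b) ha hδ hτ r).1.const_mul (δ ^ 2 / 2)
  have i3 := (intervalIntegrable_innerVal (δ := δ) (b := b) (r := r) ha hτ).const_mul r
  have i4 := intervalIntegrable_innerTimeDeriv (δ := δ) (b := b) (r := r) ha hτ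
  have hint := ((i1.add i2).sub i3).sub i4
  have h := integral_eq_sub_of_hasDerivAt_of_tendsto hτ
    (fun u hu => (hasDerivAt_innerVal_lag (b := b) (r := r) ha hδ hu.1 hu.2).congr_deriv
      (innerLagDeriv_eq hδ.ne')) hint (tendsto_innerVal_zero ha hδ hτ)
    (tendsto_innerVal_maturity ha hτ)
  rw [zero_sub] at h
  rw [← h, timeValue, ← intervalIntegral.integral_const_mul, ← intervalIntegral.integral_const_mul,
    ← intervalIntegral.integral_const_mul, ← intervalIntegral.integral_add i1 i2,
    ← intervalIntegral.integral_sub (i1.add i2) i3,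
    ← intervalIntegral.integral_sub ((i1.add i2).sub i3) i4]

lemma iSup_Icc_mul (y : ℝ) {ξ : ℝ} (hξ : 0 ≤ ξ) :
    ⨆ c : Icc (0:ℝ) ξ, (c : ℝ) * y = ξ * max y 0 := by
  have hle : ∀ c : Icc (0:ℝ) ξ, (c : ℝ) * y ≤ ξ * max y 0 := fun c =>
    (mul_le_mul_of_nonneg_left (le_max_left y 0) c.2.1).trans
      (mul_le_mul_of_nonneg_right c.2.2 (le_max_right y 0))
  have hbdd : BddAbove (range fun c : Icc (0:ℝ) ξ => (c : ℝ) * y) :=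
    ⟨_, forall_mem_range.2 hle⟩
  have : Nonempty (Icc (0:ℝ) ξ) := ⟨⟨0, le_rfl, hξ⟩⟩
  refine le_antisymm (ciSup_le hle) ?_
  rcases le_total y 0 with hy | hy
  · rw [max_eq_right hy, mul_zero]
    exact (zero_mul y).symm.le.trans (le_ciSup hbdd ⟨0, le_rfl, hξ⟩)
  · rw [max_eq_left hy]
    exact le_ciSup hbdd ⟨ξ, hξ, le_rfl⟩

end

/-- assuming `b̃ > 0`, `v` solves the HJB equation
`∂_t v + μ∂_x v + (σ²/2)∂_{xx} v + a(b−r)∂_r v + (δ²/2)∂_{rr} v − rv + ξ·max(1−∂_x v,0) = 0`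
on `(0,T) × ℝ × ℝ`, where `ξ·max(1−∂_x v,0) = sup_{0 ≤ c ≤ ξ} c(1−∂_x v)`. -/
theorem v_solves_HJB (a δ b T μ ξ σ : ℝ) (ha : 0 < a) (hδ : 0 < δ) (hT : 0 < T)
    (hb : 0 < b - δ^2/(2*a^2)) (hμ : 0 < μ) (hξ : 0 < ξ) (hσ : 0 < σ) :
    ∀ t : ℝ, 0 < t → t < T → ∀ r x : ℝ,
      deriv (fun t' => vFun a δ b T μ ξ t' r x) t
        + μ * deriv (fun x' => vFun a δ b T μ ξ t r x') x
        + σ^2/2 * deriv (deriv (fun x' => vFun a δ b T μ ξ t r x')) x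
        + a*(b - r) * deriv (fun r' => vFun a δ b T μ ξ t r' x) r
        + δ^2/2 * deriv (deriv (fun r' => vFun a δ b T μ ξ t r' x)) r
        - r * vFun a δ b T μ ξ t r x
        + ξ * max (1 - deriv (fun x' => vFun a δ b T μ ξ t r x') x) 0 = 0 ∧
      ξ * max (1 - deriv (fun x' => vFun a δ b T μ ξ t r x') x) 0
        = ⨆ c : Set.Icc (0:ℝ) ξ,
            (c : ℝ) * (1 - deriv (fun x' => vFun a δ b T μ ξ t r x') x) := by
  intro t _ ht r x
  have hτ : 0 < T - t := sub_pos.2 ht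
  set τ := T - t with hτdef
  have hγ : ∀ t' ≤ T, ∀ r', gammaFun a δ b T t' r' = timeValue a δ b (T - t') r' :=
    fun t' ht' r' => gammaFun_eq ha hδ ht'
  have hx : ∀ x', HasDerivAt (fun x' => vFun a δ b T μ ξ t r x') (M a δ b τ r) x' := fun x' => by
    have := (((hasDerivAt_id x').mul_const (M a δ b τ r)).add_const
      (μ * τ * M a δ b τ r)).add_const (ξ * gammaFun a δ b T t r)
    simpa [vFun, hτdef] using this
  have hdx : deriv (fun x' => vFun a δ b T μ ξ t r x') = fun _ => M a δ b τ r :=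
    funext fun x' => (hx x').deriv
  have hr : ∀ r', HasDerivAt (fun r' => vFun a δ b T μ ξ t r' x)
      ((x + μ * τ) * (-bondLoading a τ * M a δ b τ r')
        + ξ * ∫ u in (0:ℝ)..τ, innerRateDeriv a δ b τ r' u) r' := fun r' => by
    refine (((hasDerivAt_M_rate (a := a) (b := b) (δ := δ) (u := τ)).const_mul (x + μ * τ)).add
      ((hasDerivAt_timeValue_rate (b := b) ha hδ hτ r').2.const_mul ξ)).congr_of_eventuallyEq
      (Eventually.of_forall fun s => ?_)
    simp only [vFun, hγ t ht.le, Pi.add_apply, ← hτdef]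
    ring
  have hdr : deriv (fun r' => vFun a δ b T μ ξ t r' x) = fun r' =>
      (x + μ * τ) * (-bondLoading a τ * M a δ b τ r')
        + ξ * ∫ u in (0:ℝ)..τ, innerRateDeriv a δ b τ r' u :=
    funext fun r' => (hr r').deriv
  have hdrr : deriv (deriv fun r' => vFun a δ b T μ ξ t r' x) r =
      (x + μ * τ) * (-bondLoading a τ * (-bondLoading a τ * M a δ b τ r))
        + ξ * ∫ u in (0:ℝ)..τ, innerRateDeriv₂ a δ b τ r u := by
    rw [hdr]
    exact (((hasDerivAt_M_rate.const_mul _).const_mul _).add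
      ((hasDerivAt_integral_innerRateDeriv (b := b) ha hδ hτ r).2.const_mul ξ)).deriv
  have hdt : deriv (fun t' => vFun a δ b T μ ξ t' r x) t =
      -((x + μ * τ) * (bondRate a δ b τ r * M a δ b τ r)) - μ * M a δ b τ r
        - ξ * ∫ u in (0:ℝ)..τ, innerTimeDeriv a δ b τ r u := by
    have hM := (hasDerivAt_M_time (δ := δ) (b := b) (r := r) (u := τ) ha.ne').comp_const_sub T t
    have hV := (hasDerivAt_timeValue_time (b := b) ha hδ hτ r).comp_const_sub T t
    have hlin := ((hasDerivAt_id t).const_sub T).const_mul μ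
    refine HasDerivAt.deriv ((((hM.const_mul x).add (hlin.mul hM)).add
      (hV.const_mul ξ)).congr_of_eventuallyEq ?_ |>.congr_deriv ?_)
    · filter_upwards [Iio_mem_nhds ht] with t' ht'
      simp only [vFun, hγ t' (le_of_lt ht'), Pi.add_apply, Pi.mul_apply, id]
    · simp only [id, ← hτdef]
      ring
  refine ⟨?_, ?_⟩
  · rw [hdt, hdx, hdrr, hdr, deriv_const]
    simp only [vFun, hγ t ht.le, ← hτdef, bondRate]
    linear_combination ξ * timeValue_equation (r := r) (b := b) ha hδ hτ
  · exact (iSup_Icc_mul _ hξ.le).symm
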